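/- Let X be a real Hilbert space and let Ω, Ω_1, …, Ω_n (n ≥ 2) be nonempty closed convex subsets of X. Fix x̄ ∈ Ω, set J(x̄) := {i : x̄ ∉ Ω_i} and I(x̄) := {i : x̄ ∈ Ω_i}, and for i ∈ J(x̄) let a_i(x̄) := (x̄ − P(x̄;Ω_i))/d(x̄;Ω_i), where P(x̄;Ω_i) is the unique metric projection of x̄ onto the closed convex set Ω_i. Then x̄ is a global optimal solution of the distance version of the generalized Heron problem if and only if −Σ_{i∈J(x̄)} a_i(x̄) ∈ Σ_{i∈I(x̄)} (N(x̄;Ω_i) ∩ B) + N(x̄;Ω), where B is the closed unit ball of X and the sums are Minkowski sums of sets. -/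

import Mathlib

open Set Metric
open scoped RealInnerProductSpace

/-- The normal cone of convex analysis to a convex set `C` at `x̄ ∈ C`. -/
def convexNormalCone {X : Type*} [NormedAddCommGroup X] [InnerProductSpace ℝ X]
    (C : Set X) (xbar : X) : Set X :=
  {v | ∀ x ∈ C, ⟪v, x - xbar⟫ ≤ 0}

/-- The distance function to a nonempty convex set is convex. -/
theorem Convex.convexOn_infDist {E : Type*} [SeminormedAddCommGroup E] [NormedSpace ℝ E]
    {C : Set E} (hC : Convex ℝ C) (hne : C.Nonempty) :
    ConvexOn ℝ univ fun x => infDist x C := by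
  refine ⟨convex_univ, fun x _ y _ s t hs ht hst => le_of_forall_pos_le_add fun ε hε => ?_⟩
  obtain ⟨q, hq, hxq⟩ := (infDist_lt_iff hne).1 (lt_add_of_pos_right (infDist x C) hε)
  obtain ⟨r, hr, hyr⟩ := (infDist_lt_iff hne).1 (lt_add_of_pos_right (infDist y C) hε)
  rw [dist_eq_norm] at hxq hyr
  calc infDist (s • x + t • y) C
      ≤ dist (s • x + t • y) (s • q + t • r) := infDist_le_dist_of_mem (hC hq hr hs ht hst)
    _ = ‖s • (x - q) + t • (y - r)‖ := by rw [dist_eq_norm]; congr 1; module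
    _ ≤ s * ‖x - q‖ + t * ‖y - r‖ := by
      refine (norm_add_le _ _).trans_eq ?_
      rw [norm_smul, norm_smul, Real.norm_of_nonneg hs, Real.norm_of_nonneg ht]
    _ ≤ s * (infDist x C + ε) + t * (infDist y C + ε) := by gcongr
    _ = s • infDist x C + t • infDist y C + ε := by
      simp only [smul_eq_mul]; linear_combination ε * hst

/-- If `xbar` minimizes a finite sum of continuous convex functions over a convex set, then there
are subgradients of the summands at `xbar` whose sum is nonnegative on feasible directions. -/
theorem exists_subgradients_of_isMinOn_sum {E ι : Type*} [AddCommGroup E] [Module ℝ E]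
    [TopologicalSpace E] [IsTopologicalAddGroup E] [ContinuousSMul ℝ E] [Fintype ι]
    {f : ι → E → ℝ} (hf : ∀ i, ConvexOn ℝ univ (f i)) (hfc : ∀ i, Continuous (f i))
    {C : Set E} (hC : Convex ℝ C) {xbar : E} (hx : xbar ∈ C)
    (hmin : IsMinOn (fun x => ∑ i, f i x) C xbar) :
    ∃ g : ι → StrongDual ℝ E, (∀ i y, g i (y - xbar) ≤ f i y - f i xbar) ∧
      ∀ x ∈ C, 0 ≤ ∑ i, g i (x - xbar) := by
  classical
  let F : (ι → E) → ℝ := fun y => ∑ i, f i (y i)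
  have hF : ConvexOn ℝ univ F := by
    refine ⟨convex_univ, fun y _ z _ s t hs ht hst => ?_⟩
    simp only [F, Finset.smul_sum, ← Finset.sum_add_distrib]
    exact Finset.sum_le_sum fun i _ => (hf i).2 trivial trivial hs ht hst
  have hFc : Continuous F := by fun_prop
  obtain ⟨φ, u, hlt, hle⟩ := geometric_hahn_banach_open
    (s := {q : (ι → E) × ℝ | q.1 ∈ univ ∧ F q.1 < q.2})
    (t := (fun x : E => ((fun _ : ι => x), F fun _ => xbar)) '' C)
    hF.convex_strict_epigraph
    (by
      simp only [mem_univ, true_and]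
      exact isOpen_lt (hFc.comp continuous_fst) continuous_snd)
    (by
      rintro _ ⟨x, hxC, rfl⟩ _ ⟨y, hyC, rfl⟩ s t hs ht hst
      refine ⟨s • x + t • y, hC hxC hyC hs ht hst, ?_⟩
      ext
      · simp
      · simp [← add_mul, hst])
    (by
      rw [Set.disjoint_left]
      rintro _ ⟨-, hq⟩ ⟨x, hxC, rfl⟩
      exact hq.not_ge (hmin hxC))
  have hφ : ∀ y r, φ (y, r) = φ (y, 0) + r * φ (0, 1) := fun y r => by
    rw [← smul_eq_mul, ← map_smul, ← map_add]; simp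
  have hsep : ∀ y r, F y < r → ∀ x ∈ C,
      φ (y, 0) + r * φ (0, 1) < φ (fun _ => x, 0) + F (fun _ => xbar) * φ (0, 1) :=
    fun y r hr x hxC => by
      rw [← hφ, ← hφ]
      exact (hlt _ ⟨trivial, hr⟩).trans_le (hle _ ⟨x, hxC, rfl⟩)
  have hc : φ (0, 1) < 0 := by
    have := hsep (fun _ => xbar) (F (fun _ => xbar) + 1) (lt_add_one _) xbar hx
    linarith
  have hcle : ∀ y, ∀ x ∈ C,
      φ (y, 0) + F y * φ (0, 1) ≤ φ (fun _ => x, 0) + F (fun _ => xbar) * φ (0, 1) := by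
    intro y x hxC
    refine le_of_forall_pos_lt_add fun ε hε => ?_
    have := hsep y (F y + ε / (-φ (0, 1))) (lt_add_of_pos_right _ (by
      have := neg_pos.2 hc
      positivity)) x hxC
    have he : ε / (-φ (0, 1)) * φ (0, 1) = -ε := by field_simp [hc.ne]
    linarith [add_mul (F y) (ε / (-φ (0, 1))) (φ (0, 1))]
  let L : StrongDual ℝ (ι → E) := (-φ (0, 1))⁻¹ • φ.comp (ContinuousLinearMap.inl ℝ (ι → E) ℝ)
  have hL : ∀ y, φ (y, 0) = -φ (0, 1) * L y := fun y => by simp [L, hc.ne]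
  have hsub : ∀ y, ∀ x ∈ C, L y - F y ≤ L (fun _ => x) - F fun _ => xbar := by
    intro y x hxC
    have := hcle y x hxC
    rw [hL, hL] at this
    refine le_of_mul_le_mul_left ?_ (neg_pos.2 hc)
    linarith
  refine ⟨fun i => L.comp (ContinuousLinearMap.single ℝ (fun _ => E) i), fun i y => ?_,
    fun x hxC => ?_⟩
  · have hy := hsub (Function.update (fun _ => xbar) i y) xbar hx
    have hupd : Function.update (fun _ : ι => xbar) i y
        = (fun _ => xbar) + Pi.single i (y - xbar) := by
      ext j
      rcases eq_or_ne j i with rfl | hj <;> simp [*]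
    have hFupd : F (Function.update (fun _ => xbar) i y) - F (fun _ => xbar)
        = f i y - f i xbar := by
      simp only [F, ← Finset.sum_sub_distrib]
      rw [Finset.sum_eq_single i] <;> simp +contextual
    have hLupd : L (Function.update (fun _ => xbar) i y)
        = L (fun _ => xbar) + L (Pi.single i (y - xbar)) := by rw [hupd, map_add]
    simp only [ContinuousLinearMap.comp_apply, ContinuousLinearMap.single_apply]
    linarith
  · have hy := hsub (fun _ => xbar) x hxC
    have hsum : ∑ i, L (Pi.single i (x - xbar)) = L (fun _ => x) - L fun _ => xbar := by
      rw [← map_sum, Finset.univ_sum_single fun _ : ι => x - xbar, ← map_sub]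
      rfl
    simp only [ContinuousLinearMap.comp_apply, ContinuousLinearMap.single_apply]
    linarith

section InfDist

variable {X : Type*} [NormedAddCommGroup X] [InnerProductSpace ℝ X] {C : Set X} {x p v : X}

/-- Subgradients of a distance function have norm at most one. -/
theorem norm_le_one_of_inner_le_infDist_sub
    (h : ∀ y, ⟪v, y - x⟫ ≤ infDist y C - infDist x C) : ‖v‖ ≤ 1 := by
  have h1 := h (x + v)
  have h2 := infDist_le_infDist_add_dist (s := C) (x := x + v) (y := x)
  rw [add_sub_cancel_left, real_inner_self_eq_norm_sq] at h1
  rw [dist_eq_norm, add_sub_cancel_left] at h2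
  nlinarith [norm_nonneg v]

/-- The subdifferential of the distance function at a point of the set. -/
theorem inner_le_infDist_sub_iff_of_mem (hx : x ∈ C) :
    (∀ y, ⟪v, y - x⟫ ≤ infDist y C - infDist x C) ↔ v ∈ convexNormalCone C x ∧ ‖v‖ ≤ 1 := by
  refine ⟨fun h => ⟨fun y hy => ?_, norm_le_one_of_inner_le_infDist_sub h⟩, ?_⟩
  · simpa [infDist_zero_of_mem, hx, hy] using h y
  · rintro ⟨hv, hv1⟩ y
    rw [infDist_zero_of_mem hx, sub_zero, le_infDist ⟨x, hx⟩]
    intro q hq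
    have h1 : ⟪v, y - q⟫ ≤ ‖v‖ * ‖y - q‖ := real_inner_le_norm _ _
    have h2 : ⟪v, y - x⟫ = ⟪v, y - q⟫ + ⟪v, q - x⟫ := by rw [← inner_add_right]; simp
    rw [dist_eq_norm]
    nlinarith [hv q hq, norm_nonneg (y - q)]

/-- The subdifferential of the distance function at a point off the set. -/
theorem inner_le_infDist_sub_iff_of_infDist_pos (hC : Convex ℝ C) (hp : p ∈ C)
    (hxp : ‖x - p‖ = infDist x C) (hpos : 0 < infDist x C) :
    (∀ y, ⟪v, y - x⟫ ≤ infDist y C - infDist x C) ↔ v = (infDist x C)⁻¹ • (x - p) := by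
  constructor
  · intro h
    have hv := norm_le_one_of_inner_le_infDist_sub h
    have h1 := h p
    rw [infDist_zero_of_mem hp, ← neg_sub x p, inner_neg_right] at h1
    have h2 : ‖infDist x C • v - (x - p)‖ ^ 2 ≤ 0 := by
      rw [norm_sub_sq_real, norm_smul, Real.norm_of_nonneg hpos.le, real_inner_smul_left, hxp]
      nlinarith [mul_le_mul_of_nonneg_left h1 hpos.le, norm_nonneg v,
        mul_le_mul hv hv (norm_nonneg v) zero_le_one, mul_pos hpos hpos]
    have h3 : infDist x C • v = x - p :=
      sub_eq_zero.1 (norm_eq_zero.1 (pow_eq_zero_iff two_ne_zero |>.1 (h2.antisymm (sq_nonneg _))))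
    rw [← h3, inv_smul_smul₀ hpos.ne']
  · rintro rfl y
    have hproj : ∀ q ∈ C, ⟪x - p, q - p⟫ ≤ 0 := by
      refine (norm_eq_iInf_iff_real_inner_le_zero hC hp).1 ?_
      simpa only [infDist_eq_iInf, dist_eq_norm] using hxp
    rw [le_sub_iff_add_le, le_infDist ⟨p, hp⟩]
    intro q hq
    have h1 : ⟪x - p, y - q⟫ ≤ ‖x - p‖ * ‖y - q‖ := real_inner_le_norm _ _
    have h2 : ⟪x - p, y - x⟫ = ⟪x - p, y - q⟫ + ⟪x - p, q - p⟫ - ⟪x - p, x - p⟫ := by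
      rw [← inner_add_right, ← inner_sub_right]; congr 1; abel
    rw [real_inner_self_eq_norm_sq, hxp] at h2
    rw [hxp] at h1
    rw [real_inner_smul_left, dist_eq_norm, ← le_sub_iff_add_le, inv_mul_le_iff₀ hpos]
    nlinarith [hproj q hq]

end InfDist

/-- Characterization of optimal solutions to the (distance version of the) generalized
Heron problem with convex data in a Hilbert space: `x̄ ∈ Ω` is a global optimal
solution iff `−Σ_{i ∈ J(x̄)} aᵢ(x̄) ∈ Σ_{i ∈ I(x̄)} (N(x̄;Ωᵢ) ∩ B) + N(x̄;Ω)`, where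
`aᵢ(x̄) = (x̄ − P(x̄;Ωᵢ))/d(x̄;Ωᵢ)` and `J(x̄) = {i : x̄ ∉ Ωᵢ}`, `I(x̄) = {i : x̄ ∈ Ωᵢ}`.
The Minkowski-sum inclusion is expressed by selections `bᵢ` with `bᵢ = aᵢ(x̄)` for
`i ∈ J(x̄)`, `bᵢ ∈ N(x̄;Ωᵢ) ∩ B` for `i ∈ I(x̄)`, and `Σᵢ bᵢ + w = 0`, `w ∈ N(x̄;Ω)`. -/
theorem heron_convex_characterization_hilbert
    {X : Type*} [NormedAddCommGroup X] [InnerProductSpace ℝ X] [CompleteSpace X]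
    (n : ℕ) (hn : 2 ≤ n)
    (Ω : Set X) (hΩne : Ω.Nonempty) (hΩc : IsClosed Ω) (hΩconv : Convex ℝ Ω)
    (Ωi : Fin n → Set X) (hΩine : ∀ i, (Ωi i).Nonempty) (hΩic : ∀ i, IsClosed (Ωi i))
    (hΩiconv : ∀ i, Convex ℝ (Ωi i))
    (xbar : X) (hxbar : xbar ∈ Ω)
    (p : Fin n → X) (hp : ∀ i, p i ∈ Ωi i ∧ ‖xbar - p i‖ = infDist xbar (Ωi i))
    (a : Fin n → X) (ha : ∀ i, a i = (infDist xbar (Ωi i))⁻¹ • (xbar - p i)) :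
    (∀ x ∈ Ω, ∑ i, infDist xbar (Ωi i) ≤ ∑ i, infDist x (Ωi i)) ↔
      ∃ (b : Fin n → X) (w : X),
        (∀ i, xbar ∉ Ωi i → b i = a i) ∧
        (∀ i, xbar ∈ Ωi i → b i ∈ convexNormalCone (Ωi i) xbar ∧ ‖b i‖ ≤ 1) ∧
        w ∈ convexNormalCone Ω xbar ∧ ∑ i, b i + w = 0 := by
  have hsubdiff : ∀ (i : Fin n) (v : X),
      (∀ y, ⟪v, y - xbar⟫ ≤ infDist y (Ωi i) - infDist xbar (Ωi i)) ↔
        (xbar ∉ Ωi i → v = a i) ∧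
        (xbar ∈ Ωi i → v ∈ convexNormalCone (Ωi i) xbar ∧ ‖v‖ ≤ 1) := by
    intro i v
    by_cases hi : xbar ∈ Ωi i
    · simp [inner_le_infDist_sub_iff_of_mem hi, hi]
    · have hpos := ((hΩic i).notMem_iff_infDist_pos (hΩine i)).1 hi
      simp [inner_le_infDist_sub_iff_of_infDist_pos (hΩiconv i) (hp i).1 (hp i).2 hpos, hi, ha]
  constructor
  · intro hmin
    obtain ⟨g, hg, hgC⟩ := exists_subgradients_of_isMinOn_sum
      (fun i => (hΩiconv i).convexOn_infDist (hΩine i)) (fun i => continuous_infDist_pt (Ωi i))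
      hΩconv hxbar hmin
    let b : Fin n → X := fun i => (InnerProductSpace.toDual ℝ X).symm (g i)
    have hb : ∀ i y, ⟪b i, y⟫ = g i y := fun i y => InnerProductSpace.toDual_symm_apply
    have hbsub := fun i => (hsubdiff i (b i)).1 fun y => (hb i _).trans_le (hg i y)
    refine ⟨b, -∑ i, b i, fun i => (hbsub i).1, fun i => (hbsub i).2, fun x hx => ?_,
      add_neg_cancel _⟩
    rw [inner_neg_left, sum_inner]
    simpa only [hb, neg_nonpos] using hgC x hx
  · rintro ⟨b, w, hbJ, hbI, hw, hsum⟩ x hx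
    have hle := Finset.sum_le_sum fun i (_ : i ∈ Finset.univ) =>
      (hsubdiff i (b i)).2 ⟨hbJ i, hbI i⟩ x
    rw [← sum_inner, eq_neg_of_add_eq_zero_left hsum, inner_neg_left,
      Finset.sum_sub_distrib] at hle
    linarith [hw x hx]
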